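/- arXiv:2202.09165 — 2 statements merged into one kernel-verified Lean document; each statement's English description precedes it below -/
import Mathlib

section
/- Let G be a (d,d)-tight multigraph and let Γ ≤ ℝ^d be a group of translations generated by d linearly independent vectors γ_1,…,γ_d. Assign gains by decomposing G into d edge-disjoint spanning trees T_1,…,T_d (orienting each tree), giving every edge of T_i gain γ_i. Then the |E| × d|V| matrix M whose row for an oriented edge (e,v,w) in T_i has −γ_i in the block of columns for v, +γ_i in the block for w, and zeros elsewhere, has kernel exactly the d-dimensional space of constant vectors {(x,x,…,x) : x ∈ ℝ^d}. In particular rank M = d|V| − d. -/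
/-- The gained "fixed-lattice periodic" rigidity matrix, as a linear map
`(V → ℝ^d) → (E → ℝ)`: the row of an oriented edge `e` (from `src e` to `tgt e`)
lying in the tree of class `c e` is `⟨γ_{c e}, u (tgt e) - u (src e)⟩`,
i.e. it has `-γ_{c e}` in the block of columns of `src e`, `+γ_{c e}` in the block of
`tgt e`, and zeros elsewhere. -/
noncomputable def periodicMatrix {V E : Type} (d : ℕ)
    (src tgt : E → V) (c : E → Fin d) (γ : Fin d → EuclideanSpace ℝ (Fin d)) :
    (V → EuclideanSpace ℝ (Fin d)) →ₗ[ℝ] (E → ℝ) :=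
  LinearMap.pi fun e =>
    (innerSL ℝ (γ (c e))).toLinearMap ∘ₗ
      ((LinearMap.proj (tgt e) :
          (V → EuclideanSpace ℝ (Fin d)) →ₗ[ℝ] EuclideanSpace ℝ (Fin d)) -
        LinearMap.proj (src e))

/-- Borcea–Streinu/Whiteley style statement: if a `(d,d)`-tight multigraph is decomposed
into `d` edge-disjoint (oriented) spanning trees `T_1, …, T_d` (edge `e` belongs to tree
`c e`), and each tree edge is given gain `γ_{c e}` where `γ_1, …, γ_d` are linearly
independent translations, then the kernel of the resulting `|E| × d|V|` matrix is exactly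
the `d`-dimensional space of constant maps `V → ℝ^d`; in particular its rank is
`d|V| - d`. -/
theorem periodicMatrix_kernel {V E : Type} [Fintype V] [Fintype E] [Nonempty V] (d : ℕ)
    (src tgt : E → V) (c : E → Fin d)
    (γ : Fin d → EuclideanSpace ℝ (Fin d))
    (hγ : LinearIndependent ℝ γ)
    (hTight : (∀ X : Set V, 1 ≤ Nat.card X →
        Nat.card {e : E // src e ∈ X ∧ tgt e ∈ X} ≤ d * Nat.card X - d) ∧
      Nat.card E = d * Nat.card V - d)
    (hTree : ∀ i : Fin d,
      (∀ v w : V, Relation.ReflTransGen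
        (fun a b => ∃ e : E, c e = i ∧
          ((src e = a ∧ tgt e = b) ∨ (src e = b ∧ tgt e = a))) v w) ∧
      Nat.card {e : E // c e = i} = Fintype.card V - 1) :
    LinearMap.ker (periodicMatrix d src tgt c γ) =
      LinearMap.range (LinearMap.pi fun _ : V =>
        (LinearMap.id : EuclideanSpace ℝ (Fin d) →ₗ[ℝ] EuclideanSpace ℝ (Fin d))) ∧
    Module.finrank ℝ (LinearMap.range (periodicMatrix d src tgt c γ)) =
      d * Fintype.card V - d := by
  have hker : LinearMap.ker (periodicMatrix d src tgt c γ) =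
      LinearMap.range (LinearMap.pi fun _ : V =>
        (LinearMap.id : EuclideanSpace ℝ (Fin d) →ₗ[ℝ] EuclideanSpace ℝ (Fin d))) := by
    ext u
    rw [LinearMap.mem_ker, LinearMap.mem_range]
    constructor
    · intro hu
      have hedge : ∀ e : E, inner ℝ (γ (c e)) (u (tgt e)) = inner ℝ (γ (c e)) (u (src e)) := by
        intro e
        have h := congrFun hu e
        simp only [periodicMatrix, LinearMap.pi_apply, LinearMap.comp_apply,
          LinearMap.sub_apply, LinearMap.proj_apply, ContinuousLinearMap.coe_coe,
          innerSL_apply_apply, Pi.zero_apply, inner_sub_right] at h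
        linarith
      have hconst : ∀ (i : Fin d) (v w : V), inner ℝ (γ i) (u v) = inner ℝ (γ i) (u w) := by
        intro i v w
        induction (hTree i).1 v w with
        | refl => rfl
        | tail _ hbc ih =>
          obtain ⟨e, rfl, ⟨rfl, rfl⟩ | ⟨rfl, rfl⟩⟩ := hbc
          · rw [ih, hedge e]
          · rw [ih, hedge e]
      have hspan : Submodule.span ℝ (Set.range γ) = ⊤ :=
        hγ.span_eq_top_of_card_eq_finrank' (by simp)
      obtain ⟨v0⟩ := ‹Nonempty V›
      refine ⟨u v0, ?_⟩
      funext w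
      change u v0 = u w
      have hz : ∀ y : EuclideanSpace ℝ (Fin d), inner ℝ y (u v0 - u w) = 0 := by
        intro y
        have hy : y ∈ Submodule.span ℝ (Set.range γ) := by rw [hspan]; trivial
        induction hy using Submodule.span_induction with
        | mem x hx =>
          obtain ⟨i, rfl⟩ := hx
          rw [inner_sub_right, hconst i v0 w, sub_self]
        | zero => simp
        | add x y _ _ hx hy => rw [inner_add_left, hx, hy, add_zero]
        | smul a x _ hx => rw [inner_smul_left, hx, mul_zero]
      exact sub_eq_zero.mp (inner_self_eq_zero.mp (hz _))
    · rintro ⟨x, rfl⟩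
      funext e
      simp [periodicMatrix]
  refine ⟨hker, ?_⟩
  have hrn := LinearMap.finrank_range_add_finrank_ker (periodicMatrix d src tgt c γ)
  have hinj : Function.Injective (LinearMap.pi fun _ : V =>
        (LinearMap.id : EuclideanSpace ℝ (Fin d) →ₗ[ℝ] EuclideanSpace ℝ (Fin d))) := by
    intro x y hxy
    obtain ⟨v0⟩ := ‹Nonempty V›
    exact congrFun hxy v0
  rw [hker, LinearMap.finrank_range_of_inj hinj, Module.finrank_pi_fintype] at hrn
  simp only [finrank_euclideanSpace_fin, Finset.sum_const, Finset.card_univ, smul_eq_mul] at hrn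
  rw [mul_comm d]
  omega
end

section
/- Let Γ ≤ O(d) be a finite nontrivial group and let G be a multigraph on at least d vertices with ℙ(G,Γ) the proportion of Γ-gain maps φ on G for which (G,φ) is Γ-symmetrically rigid in ℝ^d. If G' is formed from G by adding a new vertex v0 joined by single edges to d distinct vertices v_1,…,v_d of G, then ℙ(G',Γ) = ℙ(G,Γ). -/
open Matrix

/-- The orthogonal matrix underlying an element of a point group `Γ ≤ O(d)`. -/
noncomputable def gmat {d : ℕ} {Γ : Subgroup (Matrix.orthogonalGroup (Fin d) ℝ)}
    (γ : Γ) : Matrix (Fin d) (Fin d) ℝ :=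
  ((γ : Matrix.orthogonalGroup (Fin d) ℝ) : Matrix (Fin d) (Fin d) ℝ)

/-- `gain` is a valid `Γ`-gain map: loops carry nontrivial gains and parallel edges
(in either relative orientation) carry distinct gains. -/
def IsGainMap {d : ℕ} {Γ : Subgroup (Matrix.orthogonalGroup (Fin d) ℝ)} {V E : Type}
    (src tgt : E → V) (gain : E → Γ) : Prop :=
  (∀ e, src e = tgt e → gain e ≠ 1) ∧
  (∀ e e', e ≠ e' → src e = src e' → tgt e = tgt e' → gain e ≠ gain e') ∧
  (∀ e e', e ≠ e' → src e = tgt e' → tgt e = src e' → gain e ≠ (gain e')⁻¹)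

/-- `u` is a `Γ`-symmetric infinitesimal flex of the orbit framework. -/
def IsSymFlex {d : ℕ} {Γ : Subgroup (Matrix.orthogonalGroup (Fin d) ℝ)} {V E : Type}
    (src tgt : E → V) (gain : E → Γ) (p u : V → (Fin d → ℝ)) : Prop :=
  ∀ e : E,
    (p (src e) - (gmat (gain e)).mulVec (p (tgt e))) ⬝ᵥ u (src e) +
      (p (tgt e) - (gmat (gain e)⁻¹).mulVec (p (src e))) ⬝ᵥ u (tgt e) = 0

/-- Triviality of a `Γ`-symmetric flex. -/
def IsTrivialFlex {d : ℕ} (Γ : Subgroup (Matrix.orthogonalGroup (Fin d) ℝ)) {V : Type}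
    (p u : V → (Fin d → ℝ)) : Prop :=
  ∃ (T : Matrix (Fin d) (Fin d) ℝ) (x : Fin d → ℝ),
    Tᵀ = -T ∧ (∀ v, u v = T.mulVec (p v) + x) ∧
    (∀ v, ∀ γ : Γ, (gmat γ).mulVec (u v) = T.mulVec ((gmat γ).mulVec (p v)) + x)

/-- `Γ`-symmetric rigidity of a gain graph: some orbit placement has only trivial
symmetric flexes. -/
def SymRigid {d : ℕ} (Γ : Subgroup (Matrix.orthogonalGroup (Fin d) ℝ)) {V E : Type}
    (src tgt : E → V) (gain : E → Γ) : Prop :=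
  ∃ p : V → (Fin d → ℝ),
    ∀ u : V → (Fin d → ℝ), IsSymFlex src tgt gain p u → IsTrivialFlex Γ p u

section Helpers

open Module Topology Filter

variable {d : ℕ} {Γ : Subgroup (Matrix.orthogonalGroup (Fin d) ℝ)}

lemma gmat_one : gmat (1 : Γ) = 1 := rfl

lemma gmat_mul (a b : Γ) : gmat (a * b) = gmat a * gmat b := rfl

lemma gmat_inv (a : Γ) : gmat a⁻¹ = (gmat a)ᵀ := rfl

lemma gmat_inv_mul (a : Γ) : gmat a⁻¹ * gmat a = 1 := by
  rw [← gmat_mul, inv_mul_cancel, gmat_one]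

lemma gmat_mul_inv (a : Γ) : gmat a * gmat a⁻¹ = 1 := by
  rw [← gmat_mul, mul_inv_cancel, gmat_one]

/-- Equivariant infinitesimal isometries. -/
def equivIso (Γ : Subgroup (Matrix.orthogonalGroup (Fin d) ℝ)) :
    Submodule ℝ (Matrix (Fin d) (Fin d) ℝ × (Fin d → ℝ)) where
  carrier := {k | k.1ᵀ = -k.1 ∧ (∀ γ : Γ, gmat γ * k.1 = k.1 * gmat γ) ∧
    ∀ γ : Γ, (gmat γ).mulVec k.2 = k.2}
  zero_mem' := by simp
  add_mem' := by
    rintro a b ⟨h1, h2, h3⟩ ⟨h1', h2', h3'⟩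
    refine ⟨?_, fun γ => ?_, fun γ => ?_⟩
    · simp [h1, h1']; abel
    · simp [mul_add, add_mul, h2, h2']
    · simp [Matrix.mulVec_add, h3, h3']
  smul_mem' := by
    rintro c a ⟨h1, h2, h3⟩
    refine ⟨?_, fun γ => ?_, fun γ => ?_⟩
    · simp [h1]
    · simp [h2]
    · simp [Matrix.mulVec_smul, h3]

lemma isTrivialFlex_iff [Finite Γ] {V : Type} (p u : V → (Fin d → ℝ)) :
    IsTrivialFlex Γ p u ↔
      ∃ k ∈ equivIso Γ, ∀ v, u v = k.1.mulVec (p v) + k.2 := by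
  constructor
  · rintro ⟨T, x, hT, hu, hg⟩
    have := Fintype.ofFinite Γ
    have hc : (Fintype.card Γ : ℝ) ≠ 0 := by
      exact_mod_cast Fintype.card_ne_zero
    refine ⟨((Fintype.card Γ : ℝ)⁻¹ • ∑ γ : Γ, gmat γ⁻¹ * T * gmat γ,
      (Fintype.card Γ : ℝ)⁻¹ • ∑ γ : Γ, (gmat γ⁻¹).mulVec x), ⟨?_, ?_, ?_⟩, ?_⟩
    · simp only [Matrix.transpose_smul, Matrix.transpose_sum, Matrix.transpose_mul, hT, gmat_inv,
        Matrix.transpose_transpose]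
      simp [Matrix.mul_assoc]
    · intro δ
      simp only [Matrix.mul_smul, Matrix.smul_mul, Finset.mul_sum, Finset.sum_mul]
      congr 1
      refine Fintype.sum_equiv (Equiv.mulRight δ⁻¹) _ _ fun γ => ?_
      simp only [Equiv.coe_mulRight, _root_.mul_inv_rev, inv_inv, gmat_mul]
      simp only [Matrix.mul_assoc]
      rw [gmat_inv_mul, Matrix.mul_one]
    · intro δ
      simp only [Matrix.mulVec_smul, Matrix.mulVec_sum]
      congr 1
      refine Fintype.sum_equiv (Equiv.mulRight δ⁻¹) _ _ fun γ => ?_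
      simp only [Equiv.coe_mulRight, _root_.mul_inv_rev, inv_inv, gmat_mul, Matrix.mulVec_mulVec]
    · intro v
      have key : ∀ γ : Γ, (gmat γ⁻¹ * T * gmat γ).mulVec (p v) + (gmat γ⁻¹).mulVec x = u v := by
        intro γ
        rw [Matrix.mul_assoc, ← Matrix.mulVec_mulVec, ← Matrix.mulVec_add,
          ← Matrix.mulVec_mulVec, ← hg v γ, Matrix.mulVec_mulVec, gmat_inv_mul, Matrix.one_mulVec]
      simp only [Matrix.smul_mulVec, Matrix.sum_mulVec]
      rw [← smul_add, ← Finset.sum_add_distrib, Finset.sum_congr rfl (fun γ _ => key γ)]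
      simp only [Finset.sum_const, Finset.card_univ]
      rw [← Nat.cast_smul_eq_nsmul ℝ, smul_smul, inv_mul_cancel₀ hc, one_smul]
  · rintro ⟨⟨T, x⟩, ⟨h1, h2, h3⟩, hu⟩
    refine ⟨T, x, h1, hu, fun v γ => ?_⟩
    simp only at h1 h2 h3 hu
    rw [hu, Matrix.mulVec_add, h3, Matrix.mulVec_mulVec, h2, ← Matrix.mulVec_mulVec]

/-- The trivial motion map. -/
def trivMap (Γ : Subgroup (Matrix.orthogonalGroup (Fin d) ℝ)) {V : Type}
    (p : V → (Fin d → ℝ)) : equivIso Γ →ₗ[ℝ] (V → (Fin d → ℝ)) where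
  toFun k := fun v => k.1.1.mulVec (p v) + k.1.2
  map_add' a b := by
    funext v
    simp [Matrix.add_mulVec]; abel
  map_smul' c a := by
    funext v
    simp [Matrix.smul_mulVec]

/-- The orbit rigidity map. -/
noncomputable def rigMap {V E : Type} (src tgt : E → V) (gain : E → Γ) (p : V → (Fin d → ℝ)) :
    (V → (Fin d → ℝ)) →ₗ[ℝ] (E → ℝ) where
  toFun u := fun e => (p (src e) - (gmat (gain e)).mulVec (p (tgt e))) ⬝ᵥ u (src e) +
      (p (tgt e) - (gmat (gain e)⁻¹).mulVec (p (src e))) ⬝ᵥ u (tgt e)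
  map_add' a b := by
    funext e
    simp [dotProduct_add]; ring
  map_smul' c a := by
    funext e
    simp [dotProduct_smul]; ring

lemma isSymFlex_iff {V E : Type} (src tgt : E → V) (gain : E → Γ) (p u : V → (Fin d → ℝ)) :
    IsSymFlex src tgt gain p u ↔ u ∈ LinearMap.ker (rigMap src tgt gain p) := by
  rw [LinearMap.mem_ker, funext_iff]
  rfl

lemma skew_dot (T : Matrix (Fin d) (Fin d) ℝ) (hT : Tᵀ = -T) (y : Fin d → ℝ) :
    y ⬝ᵥ T.mulVec y = 0 := by
  have h : y ⬝ᵥ T.mulVec y = - (y ⬝ᵥ T.mulVec y) := by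
    conv_lhs => rw [Matrix.dotProduct_mulVec, ← Matrix.mulVec_transpose, hT, Matrix.neg_mulVec,
      neg_dotProduct, dotProduct_comm]
  linarith

lemma edge_trivial (γ : Γ) (k : Matrix (Fin d) (Fin d) ℝ × (Fin d → ℝ)) (hk : k ∈ equivIso Γ)
    (a b : Fin d → ℝ) :
    (a - (gmat γ).mulVec b) ⬝ᵥ (k.1.mulVec a + k.2) +
      (b - (gmat γ⁻¹).mulVec a) ⬝ᵥ (k.1.mulVec b + k.2) = 0 := by
  obtain ⟨h1, h2, h3⟩ := hk
  have e1 : b - (gmat γ⁻¹).mulVec a = - (gmat γ⁻¹).mulVec (a - (gmat γ).mulVec b) := by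
    rw [Matrix.mulVec_sub, Matrix.mulVec_mulVec, gmat_inv_mul, Matrix.one_mulVec]; abel
  have e2 : (gmat γ⁻¹).mulVec (a - (gmat γ).mulVec b) ⬝ᵥ (k.1.mulVec b + k.2) =
      (a - (gmat γ).mulVec b) ⬝ᵥ (gmat γ).mulVec (k.1.mulVec b + k.2) := by
    rw [gmat_inv, Matrix.mulVec_transpose, Matrix.dotProduct_mulVec]
  have e3 : (gmat γ).mulVec (k.1.mulVec b + k.2) = k.1.mulVec ((gmat γ).mulVec b) + k.2 := by
    rw [Matrix.mulVec_add, h3, Matrix.mulVec_mulVec, h2, ← Matrix.mulVec_mulVec]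
  rw [e1, neg_dotProduct, e2, e3, ← sub_eq_add_neg, ← dotProduct_sub, add_sub_add_right_eq_sub,
    ← Matrix.mulVec_sub]
  exact skew_dot _ h1 _

lemma range_triv_le {V E : Type} (src tgt : E → V) (gain : E → Γ) (p : V → (Fin d → ℝ)) :
    LinearMap.range (trivMap Γ p) ≤ LinearMap.ker (rigMap src tgt gain p) := by
  rintro _ ⟨k, rfl⟩
  rw [← isSymFlex_iff]
  intro e
  exact edge_trivial (gain e) k.1 k.2 _ _

/-- Rigidity at a placement. -/
def RigidAt {V E : Type} (src tgt : E → V) (gain : E → Γ) (p : V → (Fin d → ℝ)) : Prop :=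
  ∀ u : V → (Fin d → ℝ), IsSymFlex src tgt gain p u → IsTrivialFlex Γ p u

lemma mem_range_triv [Finite Γ] {V : Type} (p u : V → (Fin d → ℝ)) :
    IsTrivialFlex Γ p u ↔ u ∈ LinearMap.range (trivMap Γ p) := by
  rw [isTrivialFlex_iff]
  constructor
  · rintro ⟨k, hk, hu⟩
    exact ⟨⟨k, hk⟩, (funext hu).symm⟩
  · rintro ⟨k, rfl⟩
    exact ⟨k.1, k.2, fun v => rfl⟩

lemma rigidAt_iff [Finite Γ] {V E : Type} (src tgt : E → V) (gain : E → Γ)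
    (p : V → (Fin d → ℝ)) :
    RigidAt src tgt gain p ↔
      LinearMap.ker (rigMap src tgt gain p) ≤ LinearMap.range (trivMap Γ p) := by
  constructor
  · intro h u hu
    exact (mem_range_triv p u).1 (h u ((isSymFlex_iff ..).2 hu))
  · intro h u hu
    exact (mem_range_triv p u).2 (h ((isSymFlex_iff ..).1 hu))

lemma rank_lsc {X Y : Type*} [AddCommGroup X] [Module ℝ X] [NormedAddCommGroup Y]
    [NormedSpace ℝ Y] [FiniteDimensional ℝ Y] (A : ℝ → X →ₗ[ℝ] Y)
    (hA : ∀ x, Continuous fun t => A t x) (t₀ : ℝ) :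
    ∀ᶠ t in 𝓝 t₀, finrank ℝ (LinearMap.range (A t₀)) ≤ finrank ℝ (LinearMap.range (A t)) := by
  let b := finBasis ℝ (LinearMap.range (A t₀))
  have hx : ∀ i, ∃ x, A t₀ x = b i := fun i => (b i).2
  choose x hx using hx
  have hli : LinearIndependent ℝ (fun i => A t₀ (x i)) := by
    have := b.linearIndependent.map' (LinearMap.range (A t₀)).subtype (Submodule.ker_subtype _)
    have e : (fun i => A t₀ (x i)) = (LinearMap.range (A t₀)).subtype ∘ b := funext hx
    rw [e]
    exact this
  have hcont : Continuous fun t => (fun i => A t (x i)) := continuous_pi fun i => hA (x i)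
  have hopen := (isOpen_setOfPred_linearIndependent (𝕜 := ℝ) (E := Y)
    (ι := Fin (finrank ℝ (LinearMap.range (A t₀))))).preimage hcont
  filter_upwards [hopen.mem_nhds hli] with t ht
  have h2 : LinearIndependent ℝ (fun i => (⟨A t (x i), ⟨x i, rfl⟩⟩ : LinearMap.range (A t))) :=
    LinearIndependent.of_comp (LinearMap.range (A t)).subtype ht
  simpa using h2.fintype_card_le_finrank

lemma rigid_open [Finite Γ] {V E : Type} [Fintype V] [Fintype E] (src tgt : E → V)
    (gain : E → Γ) (p₀ p₁ : V → (Fin d → ℝ)) (h : RigidAt src tgt gain p₀) :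
    ∀ᶠ t in 𝓝 (0 : ℝ), RigidAt src tgt gain (p₀ + t • p₁) := by
  have h1 := rank_lsc (fun t => rigMap src tgt gain (p₀ + t • p₁)) (by
    intro u
    refine continuous_pi fun e => ?_
    simp only [rigMap, LinearMap.coe_mk, AddHom.coe_mk, Pi.add_apply, Pi.smul_apply,
      Matrix.mulVec_add, Matrix.mulVec_smul, dotProduct, Pi.sub_apply]
    fun_prop) 0
  have h2 := rank_lsc (fun t => trivMap Γ (p₀ + t • p₁)) (by
    intro k
    refine continuous_pi fun v => continuous_pi fun i => ?_
    simp only [trivMap, LinearMap.coe_mk, AddHom.coe_mk, Pi.add_apply, Pi.smul_apply,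
      Matrix.mulVec_add, Matrix.mulVec_smul]
    fun_prop) 0
  rw [rigidAt_iff] at h
  filter_upwards [h1, h2] with t h1 h2
  rw [rigidAt_iff]
  have e0 : p₀ + (0 : ℝ) • p₁ = p₀ := by rw [zero_smul, add_zero]
  rw [e0] at h1 h2
  have r0 := LinearMap.finrank_range_add_finrank_ker (rigMap src tgt gain p₀)
  have rt := LinearMap.finrank_range_add_finrank_ker (rigMap src tgt gain (p₀ + t • p₁))
  have hle := Submodule.finrank_mono h
  exact (Submodule.eq_of_le_of_finrank_le (range_triv_le src tgt gain _) (by omega)).ge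

/-- The block of the new vertex. -/
noncomputable def newBlock {V : Type} (v : Fin d → V) (h : Fin d → Γ) (p : Option V → (Fin d → ℝ)) :
    Matrix (Fin d) (Fin d) ℝ :=
  Matrix.of fun i => p none - (gmat (h i)).mulVec (p (some (v i)))

lemma generic_exists [Finite Γ] {V W E : Type} [Fintype W] [Fintype E] (src tgt : E → W)
    (gain : E → Γ) (r : (Option V → (Fin d → ℝ)) →ₗ[ℝ] (W → (Fin d → ℝ)))
    (v : Fin d → V) (hv : Function.Injective v) (h : Fin d → Γ)
    (p₀ : Option V → (Fin d → ℝ)) (hr : RigidAt src tgt gain (r p₀)) :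
    ∃ p : Option V → (Fin d → ℝ), RigidAt src tgt gain (r p) ∧ (newBlock v h p).det ≠ 0 := by
  let p₁ : Option V → (Fin d → ℝ) := fun o => o.elim 0
    (Function.extend v (fun i => -(gmat (h i)⁻¹).mulVec (Pi.single i 1)) 0)
  have hN : ∀ t : ℝ, newBlock v h (p₀ + t • p₁) =
      Matrix.scalar (Fin d) t - (-(newBlock v h p₀)) := by
    intro t
    ext i j
    have : p₁ (some (v i)) = -(gmat (h i)⁻¹).mulVec (Pi.single i 1) :=
      hv.extend_apply (fun i => -(gmat (h i)⁻¹).mulVec (Pi.single i 1)) 0 i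
    have h0 : p₁ none = 0 := rfl
    simp only [newBlock, Matrix.of_apply, Pi.add_apply, Pi.smul_apply, this, h0,
      Matrix.mulVec_add, Matrix.mulVec_smul, Matrix.mulVec_neg, Matrix.mulVec_mulVec, gmat_mul_inv,
      Matrix.one_mulVec, Pi.sub_apply, Matrix.sub_apply, Matrix.neg_apply, Matrix.scalar_apply,
      Matrix.diagonal_apply, Pi.neg_apply, Pi.single_apply, Pi.zero_apply, smul_eq_mul]
    by_cases hij : i = j
    · subst hij; simp; ring
    · simp [hij, Ne.symm hij]
  have hdet : ∀ᶠ t in 𝓝[≠] (0 : ℝ), (newBlock v h (p₀ + t • p₁)).det ≠ 0 := by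
    have hne : (-(newBlock v h p₀)).charpoly ≠ 0 := (Matrix.charpoly_monic _).ne_zero
    have hfin := Polynomial.finite_setOfPred_isRoot hne
    have := (hfin.subset (Set.sdiff_subset (t := {0}))).isClosed.isOpen_compl
    have h0 : ∀ᶠ t in 𝓝 (0 : ℝ), t ∈ ({x | (-(newBlock v h p₀)).charpoly.IsRoot x} \ {0})ᶜ :=
      this.mem_nhds (by simp)
    filter_upwards [h0.filter_mono nhdsWithin_le_nhds, self_mem_nhdsWithin] with t ht ht0 hd
    apply ht
    refine ⟨?_, ht0⟩
    simp only [Set.mem_ofPred_eq, Polynomial.IsRoot, Matrix.eval_charpoly]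
    rw [← hN, hd]
  have hrig := (rigid_open src tgt gain (r p₀) (r p₁) hr).filter_mono
    (nhdsWithin_le_nhds (s := {(0 : ℝ)}ᶜ))
  obtain ⟨t, ht1, ht2⟩ := (hrig.and hdet).exists
  exact ⟨p₀ + t • p₁, by simpa using ht1, ht2⟩

section ext
variable {V E : Type} (src tgt : E → V) (v : Fin d → V)

lemma flex_ext_iff (g' : E ⊕ Fin d → Γ) (p u : Option V → (Fin d → ℝ)) :
    IsSymFlex (Sum.elim (fun e => some (src e)) (fun _ => (none : Option V)))
      (Sum.elim (fun e => some (tgt e)) (fun i => some (v i))) g' p u ↔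
    IsSymFlex src tgt (g' ∘ Sum.inl) (p ∘ some) (u ∘ some) ∧
    ∀ i, (newBlock v (g' ∘ Sum.inr) p).mulVec (u none) i =
      -((p (some (v i)) - (gmat (g' (Sum.inr i))⁻¹).mulVec (p none)) ⬝ᵥ u (some (v i))) := by
  unfold IsSymFlex
  rw [Sum.forall]
  refine and_congr Iff.rfl (forall_congr' fun i => ?_)
  rw [← add_eq_zero_iff_eq_neg]
  rfl

lemma rigidAt_ext_iff [Finite Γ] (g' : E ⊕ Fin d → Γ) (p : Option V → (Fin d → ℝ))
    (hp : (newBlock v (g' ∘ Sum.inr) p).det ≠ 0) :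
    RigidAt (Sum.elim (fun e => some (src e)) (fun _ => (none : Option V)))
      (Sum.elim (fun e => some (tgt e)) (fun i => some (v i))) g' p ↔
    RigidAt src tgt (g' ∘ Sum.inl) (p ∘ some) := by
  constructor
  · intro h u hu
    let b : Fin d → ℝ := fun i =>
      -((p (some (v i)) - (gmat (g' (Sum.inr i))⁻¹).mulVec (p none)) ⬝ᵥ u (v i))
    let u' : Option V → (Fin d → ℝ) := fun o =>
      o.elim ((newBlock v (g' ∘ Sum.inr) p)⁻¹.mulVec b) u
    have hf := h u' ((flex_ext_iff src tgt v g' p u').2 ⟨hu, fun i => by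
      change (newBlock v (g' ∘ Sum.inr) p).mulVec
        ((newBlock v (g' ∘ Sum.inr) p)⁻¹.mulVec b) i = b i
      rw [Matrix.mulVec_mulVec, Matrix.mul_nonsing_inv _ (isUnit_iff_ne_zero.2 hp),
        Matrix.one_mulVec]⟩)
    obtain ⟨T, x, h1, h2, h3⟩ := hf
    exact ⟨T, x, h1, fun w => h2 (some w), fun w => h3 (some w)⟩
  · intro h u hu
    obtain ⟨hu1, hu2⟩ := (flex_ext_iff src tgt v g' p u).1 hu
    obtain ⟨k, hk, hku⟩ := (isTrivialFlex_iff _ _).1 (h _ hu1)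
    have hw : (newBlock v (g' ∘ Sum.inr) p).mulVec (u none - (k.1.mulVec (p none) + k.2)) = 0 := by
      rw [Matrix.mulVec_sub, sub_eq_zero]
      funext i
      have := edge_trivial (g' (Sum.inr i)) k hk (p none) (p (some (v i)))
      have e : u (some (v i)) = k.1.mulVec (p (some (v i))) + k.2 := hku (v i)
      rw [hu2 i, e]
      exact (eq_neg_of_add_eq_zero_left this).symm
    have := Matrix.eq_zero_of_mulVec_eq_zero hp hw
    refine (isTrivialFlex_iff _ _).2 ⟨k, hk, ?_⟩
    rintro (_ | w)
    · exact sub_eq_zero.1 this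
    · exact hku w

lemma symRigid_ext_iff [Finite Γ] [Fintype V] [Fintype E] (hv : Function.Injective v)
    (g' : E ⊕ Fin d → Γ) :
    SymRigid Γ (Sum.elim (fun e => some (src e)) (fun _ => (none : Option V)))
      (Sum.elim (fun e => some (tgt e)) (fun i => some (v i))) g' ↔
    SymRigid Γ src tgt (g' ∘ Sum.inl) := by
  constructor
  · rintro ⟨p, hp⟩
    obtain ⟨q, hq, hd⟩ := generic_exists _ _ g' LinearMap.id v hv (g' ∘ Sum.inr) p hp
    exact ⟨q ∘ some, (rigidAt_ext_iff src tgt v g' q hd).1 hq⟩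
  · rintro ⟨p, hp⟩
    obtain ⟨q, hq, hd⟩ := generic_exists src tgt (g' ∘ Sum.inl)
      (LinearMap.funLeft ℝ (Fin d → ℝ) (some : V → Option V)) v hv (g' ∘ Sum.inr)
      (fun o => o.elim 0 p) hp
    exact ⟨q, (rigidAt_ext_iff src tgt v g' q hd).2 hq⟩

lemma isGainMap_ext_iff (hv : Function.Injective v) (g' : E ⊕ Fin d → Γ) :
    IsGainMap (Sum.elim (fun e => some (src e)) (fun _ => (none : Option V)))
      (Sum.elim (fun e => some (tgt e)) (fun i => some (v i))) g' ↔
    IsGainMap src tgt (g' ∘ Sum.inl) := by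
  unfold IsGainMap
  simp only [Sum.forall, Sum.elim_inl, Sum.elim_inr, Option.some_inj, reduceCtorEq,
    Function.comp, ne_eq, Sum.inl.injEq, Sum.inr.injEq, hv.eq_iff]
  simp +contextual

end ext

lemma card_ext {E : Type} (P : (E → Γ) → Prop) (Q : (E ⊕ Fin d → Γ) → Prop)
    (h : ∀ g', Q g' ↔ P (g' ∘ Sum.inl)) :
    Nat.card {g' : E ⊕ Fin d → Γ // Q g'} = Nat.card {g : E → Γ // P g} * Nat.card (Fin d → Γ) := by
  rw [← Nat.card_prod]
  refine Nat.card_congr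
    { toFun := fun g => (⟨g.1 ∘ Sum.inl, (h _).1 g.2⟩, g.1 ∘ Sum.inr)
      invFun := fun a => ⟨Sum.elim a.1.1 a.2, (h _).2 (by simpa using a.1.2)⟩
      left_inv := fun g => by
        apply Subtype.ext
        simp
      right_inv := fun a => by simp }

end Helpers

/-- Let `Γ ≤ O(d)` be a finite nontrivial point group and `G` a multigraph on at least
`d` vertices.  If `G'` is formed from `G` by adding a new vertex (`none`) joined by
single edges to `d` distinct vertices `v 0, …, v (d-1)` of `G`, then the probability
that a uniformly random `Γ`-gain map on `G'` is a rigid gain assignment equals the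
corresponding probability for `G`. -/
theorem prob_rigid_gain_zero_extension {d : ℕ}
    (Γ : Subgroup (Matrix.orthogonalGroup (Fin d) ℝ)) [Finite Γ] (hΓ : Γ ≠ ⊥)
    {V E : Type} [Fintype V] [Fintype E] (hV : d ≤ Fintype.card V)
    (src tgt : E → V) (v : Fin d → V) (hv : Function.Injective v) :
    ((Nat.card {g' : (E ⊕ Fin d) → Γ //
        IsGainMap (Sum.elim (fun e => some (src e)) (fun _ => (none : Option V)))
          (Sum.elim (fun e => some (tgt e)) (fun i => some (v i))) g' ∧
        SymRigid Γ (Sum.elim (fun e => some (src e)) (fun _ => (none : Option V)))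
          (Sum.elim (fun e => some (tgt e)) (fun i => some (v i))) g'} : ℚ) /
      (Nat.card {g' : (E ⊕ Fin d) → Γ //
        IsGainMap (Sum.elim (fun e => some (src e)) (fun _ => (none : Option V)))
          (Sum.elim (fun e => some (tgt e)) (fun i => some (v i))) g'} : ℚ)) =
    ((Nat.card {g : E → Γ //
        IsGainMap src tgt g ∧ SymRigid Γ src tgt g} : ℚ) /
      (Nat.card {g : E → Γ // IsGainMap src tgt g} : ℚ)) := by
  rw [card_ext (IsGainMap src tgt) _ (fun g' => isGainMap_ext_iff src tgt v hv g'),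
    card_ext (fun g => IsGainMap src tgt g ∧ SymRigid Γ src tgt g) _ (fun g' =>
      and_congr (isGainMap_ext_iff src tgt v hv g') (symRigid_ext_iff src tgt v hv g'))]
  push_cast
  refine mul_div_mul_right _ _ ?_
  have : Nat.card (Fin d → Γ) ≠ 0 := Nat.card_pos.ne'
  exact_mod_cast this
end
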